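/- Let p be a real number with 0 < p < 1, and let (m_n) and (k_n) be sequences of natural numbers tending to infinity. Let μ_n be the product of the Binomial(m_n, p) and Binomial(k_n, p) distributions on pairs (i, j). Then μ_n{(i, j) : i ≥ m_n·p and j ≥ k_n·p} → 1/4 as n → ∞. Consequently, in the matched data setting with equal margins λ₁₊ = λ₊₁ = p, the asymptotic actual corroboration of the upper Fréchet bound U₀ = min(λ₁₊, λ₊₁) = p equals 0.25. -/

import Mathlib

/-!
Each count, centred and scaled, is asymptotically standard normal. The characteristic function of
`(K - n p) / √(n p (1 - p))` for `K ~ Bin(n, p)` is, by the binomial theorem, the `n`-th power of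
the characteristic function of a standardized Bernoulli variable evaluated at `t / √n`
(`charFun_stdBinomial`), so it converges to `exp (-t² / 2)`, and Lévy's continuity theorem gives
weak convergence. The standard Gaussian is symmetric without atoms, so it gives mass `1 / 2` to
`[0, ∞)`, a set with null frontier; by the portmanteau theorem, the probability of `K ≥ n p` tends
to `1 / 2` (`tendsto_binomial_upper_tail`). By independence the joint probability is the product of
two such tails, with limit `1 / 2 * 1 / 2`.
-/

open Filter

open MeasureTheory ProbabilityTheory Topology
open scoped unitInterval

/-- The law of `(K - n p) / (√n √(p (1 - p)))` where `K ~ Bin(n, p)`. -/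
noncomputable def stdBinomial (n : ℕ) (p : I) : Measure ℝ :=
  (binomial n p).map fun k : ℕ ↦
    (√(n : ℝ))⁻¹ * (((k : ℝ) - n * p) / √((p : ℝ) * (1 - p)))

instance (n : ℕ) (p : I) : IsProbabilityMeasure (stdBinomial n p) :=
  Measure.isProbabilityMeasure_map .of_discrete

/-- The law of `(B - p) / √(p (1 - p))` where `B` is a Bernoulli variable with parameter `p`. -/
noncomputable def stdBernoulli (p : I) : Measure ℝ :=
  bernoulliMeasure ((1 - p) / √((p : ℝ) * (1 - p))) (-p / √((p : ℝ) * (1 - p))) p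

instance (p : I) : IsProbabilityMeasure (stdBernoulli p) := by
  unfold stdBernoulli; infer_instance

lemma charFun_stdBinomial (n : ℕ) (p : I) (t : ℝ) :
    charFun (stdBinomial n p) t = charFun (stdBernoulli p) ((√(n : ℝ))⁻¹ * t) ^ n := by
  rw [charFun_apply_real, charFun_apply_real, stdBinomial, stdBernoulli,
    integral_map .of_discrete (by fun_prop), integral_binomial, integral_bernoulliMeasure,
    add_pow, ← Nat.range_succ_eq_Iic]
  refine Finset.sum_congr rfl fun k hk ↦ ?_
  have hk' : k ≤ n := by simpa [Nat.lt_succ_iff] using hk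
  obtain ⟨l, rfl⟩ := Nat.exists_eq_add_of_le hk'
  simp only [Complex.real_smul, mul_pow, ← Complex.exp_nat_mul, add_tsub_cancel_left]
  -- The exponents agree because `k - (k + l) p = k (1 - p) + l (-p)`.
  have h : Complex.exp (t * ((√((k + l : ℕ) : ℝ))⁻¹ *
        (((k : ℝ) - (k + l : ℕ) * p) / √((p : ℝ) * (1 - p))) : ℝ) * Complex.I) =
      Complex.exp (k * (((√((k + l : ℕ) : ℝ))⁻¹ * t : ℝ) *
        ((1 - p) / √((p : ℝ) * (1 - p)) : ℝ) * Complex.I)) *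
      Complex.exp (l * (((√((k + l : ℕ) : ℝ))⁻¹ * t : ℝ) *
        (-p / √((p : ℝ) * (1 - p)) : ℝ) * Complex.I)) := by
    rw [← Complex.exp_add]
    congr 1
    push_cast
    ring
  rw [h]
  push_cast
  ring

lemma gaussianReal_Ici_zero : gaussianReal 0 1 (Set.Ici 0) = 1 / 2 := by
  have hn : NullSingletonClass (gaussianReal 0 1) := nullSingletonClass_gaussianReal (by simp)
  have h1 : gaussianReal 0 1 (Set.Iio 0) = gaussianReal 0 1 (Set.Ici 0) := by
    conv_lhs => rw [← neg_zero (G := ℝ), ← gaussianReal_map_neg, neg_zero]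
    rw [Measure.map_apply (by fun_prop) measurableSet_Iio, ← measure_congr Ioi_ae_eq_Ici]
    congr 1
    ext x
    simp
  have h2 := measure_add_measure_compl (μ := gaussianReal 0 1) (measurableSet_Ici (a := (0 : ℝ)))
  rw [Set.compl_Ici, h1, measure_univ, ← two_mul] at h2
  rw [ENNReal.eq_div_iff (by simp) (by simp), h2]

lemma tendsto_stdBinomial_Ici (p : I) (hp₀ : 0 < (p : ℝ)) (hp₁ : (p : ℝ) < 1) :
    Tendsto (fun n ↦ (stdBinomial n p) (Set.Ici 0)) atTop (𝓝 (1 / 2)) := by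
  have hs : 0 < (p : ℝ) * (1 - p) := mul_pos hp₀ (by linarith)
  have hlim : Tendsto (β := ProbabilityMeasure ℝ) (fun n ↦ ⟨stdBinomial n p, inferInstance⟩) atTop
      (𝓝 ⟨gaussianReal 0 1, inferInstance⟩) := by
    refine ProbabilityMeasure.tendsto_iff_tendsto_charFun.2 fun t ↦ ?_
    have h := tendsto_charFun_inv_sqrt_mul_pow (P := stdBernoulli p) (X := id) aemeasurable_id
      (by
        rw [stdBernoulli, integral_bernoulliMeasure]
        simp only [id, smul_eq_mul]
        ring)
      (by
        rw [stdBernoulli, integral_bernoulliMeasure]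
        simp only [Pi.pow_apply, id, smul_eq_mul, div_pow, Real.sq_sqrt hs.le]
        have : 1 - (p : ℝ) ≠ 0 := by linarith
        field_simp
        ring) t
    simpa [charFun_stdBinomial, charFun_gaussianReal, neg_div] using h
  have hn : NullSingletonClass (gaussianReal 0 1) := nullSingletonClass_gaussianReal (by simp)
  have := ProbabilityMeasure.tendsto_measure_of_null_frontier_of_tendsto' hlim
    (E := Set.Ici 0) (by simp)
  simpa only [ProbabilityMeasure.coe_mk, gaussianReal_Ici_zero] using this

/-- For `K ~ Bin(n, p)`, written as an explicit finite sum: `P(K ≥ n p) → 1 / 2`. -/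
lemma tendsto_binomial_upper_tail (p : ℝ) (hp₀ : 0 < p) (hp₁ : p < 1) :
    Tendsto (fun n : ℕ ↦ ∑ i ∈ Finset.range (n + 1),
      if (n : ℝ) * p ≤ i then (n.choose i : ℝ) * p ^ i * (1 - p) ^ (n - i) else 0)
      atTop (𝓝 (1 / 2)) := by
  lift p to I using Set.mem_Icc.2 ⟨hp₀.le, hp₁.le⟩
  have hs : 0 < (p : ℝ) * (1 - p) := mul_pos hp₀ (by linarith)
  have h := (ENNReal.tendsto_toReal (by simp)).comp
    (tendsto_stdBinomial_Ici p hp₀ hp₁)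
  rw [show ((1 : ENNReal) / 2).toReal = 1 / 2 by simp] at h
  refine h.congr' ?_
  filter_upwards [eventually_gt_atTop 0] with n hn
  -- Positivity matters: at `n = 0` the standardization multiplies by the junk value `(√0)⁻¹ = 0`.
  have hn' : (0 : ℝ) < n := by exact_mod_cast hn
  rw [Function.comp_apply, stdBinomial, Measure.map_apply .of_discrete measurableSet_Ici,
    ← measureReal_def, ← integral_indicator_one .of_discrete, integral_binomial,
    ← Nat.range_succ_eq_Iic]
  refine Finset.sum_congr rfl fun k _ ↦ ?_
  have hiff : k ∈ (fun k : ℕ ↦ (√(n : ℝ))⁻¹ * (((k : ℝ) - n * p) / √((p : ℝ) * (1 - p)))) ⁻¹'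
      Set.Ici 0 ↔ (n : ℝ) * p ≤ k := by
    rw [Set.mem_preimage, Set.mem_Ici, mul_nonneg_iff_of_pos_left (by positivity), le_div_iff₀ (Real.sqrt_pos.2 hs), zero_mul,
      sub_nonneg]
  rw [smul_eq_mul]
  split_ifs with hk
  · rw [Set.indicator_of_mem (hiff.2 hk), Pi.one_apply, mul_one]
  · rw [Set.indicator_of_notMem (mt hiff.1 hk), mul_zero]

/-- For independent Binomial(m_n, p) and Binomial(k_n, p) counts with `m_n, k_n → ∞`,
the probability that both empirical proportions are at least `p` tends to `1/4`.
Hence in the matched data setting with equal margins `λ₁₊ = λ₊₁ = p`, the asymptotic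
corroboration of the upper Fréchet bound `U₀ = p` equals `0.25`. -/
theorem two_binomials_upper_tail_tendsto_quarter
    (p : ℝ) (hp₀ : 0 < p) (hp₁ : p < 1)
    (m k : ℕ → ℕ) (hm : Tendsto m atTop atTop) (hk : Tendsto k atTop atTop) :
    Tendsto (fun n : ℕ =>
        ∑ i ∈ Finset.range (m n + 1), ∑ j ∈ Finset.range (k n + 1),
          (if (m n : ℝ) * p ≤ (i : ℝ) ∧ (k n : ℝ) * p ≤ (j : ℝ) then
            ((m n).choose i : ℝ) * p ^ i * (1 - p) ^ (m n - i) *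
              (((k n).choose j : ℝ) * p ^ j * (1 - p) ^ (k n - j))
          else 0))
      atTop (nhds (1 / 4)) := by
  have h := ((tendsto_binomial_upper_tail p hp₀ hp₁).comp hm).mul
    ((tendsto_binomial_upper_tail p hp₀ hp₁).comp hk)
  rw [show (1 / 2 : ℝ) * (1 / 2) = 1 / 4 by norm_num] at h
  refine h.congr fun n ↦ ?_
  simp only [Function.comp_apply, Finset.sum_mul_sum, ite_zero_mul_ite_zero]
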